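/- arXiv:1006.2560 — 3 statements merged into one kernel-verified Lean document; each statement's English description precedes it below -/
import Mathlib

section
/- Let α ⪰ ω be lattice paths from (0,0) to (n,r). Then the set Γ of all monomials dividing some m(σ) with α ⪰ σ ⪰ ω is a discrete polymatroid of rank r, and its bases (maximal elements under divisibility) are exactly the monomials m(σ) for α ⪰ σ ⪰ ω. -/
/-- A lattice path from `(0,0)` to `(n,r)`, encoded by the set of positions of
its north steps among its `n + r` steps. -/
def IsLatticePath (n r : ℕ) (σ : Finset ℕ) : Prop :=
  σ ⊆ Finset.Icc 1 (n + r) ∧ σ.card = r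

/-- `σ ⪰ τ`: each element of `N(σ)`, in increasing order, is at most the
corresponding element of `N(τ)`. -/
def PathAbove (σ τ : Finset ℕ) : Prop :=
  ∀ k (h1 : k < (σ.sort (· ≤ ·)).length) (h2 : k < (τ.sort (· ≤ ·)).length),
    (σ.sort (· ≤ ·)).get ⟨k, h1⟩ ≤ (τ.sort (· ≤ ·)).get ⟨k, h2⟩

/-- The number of east steps of `σ` before position `a`. -/
def eastBefore (σ : Finset ℕ) (a : ℕ) : ℕ :=
  ((Finset.Icc 1 (a - 1)).filter (fun b => b ∉ σ)).card

/-- The monomial `m(σ)` of a lattice path: the exponent of `x_i` is the number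
of north steps of `σ` along the line `x = i`. -/
noncomputable def pathMonomial (σ : Finset ℕ) : ℕ →₀ ℕ :=
  ∑ a ∈ σ, Finsupp.single (eastBefore σ a) 1

/-- The bases of the lattice path polymatroid `Γ(α, ω)`: the monomials `m(σ)`
for lattice paths `σ` with `α ⪰ σ ⪰ ω`. -/
def IsLPBasis (n r : ℕ) (α ω : Finset ℕ) (m : ℕ →₀ ℕ) : Prop :=
  ∃ σ : Finset ℕ, IsLatticePath n r σ ∧ PathAbove α σ ∧ PathAbove σ ω ∧ m = pathMonomial σ
/-- The total degree of a monomial (exponent vector). -/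
def monDeg (m : ℕ →₀ ℕ) : ℕ := m.sum fun _ v => v

/-- A discrete polymatroid: a finite, divisibility-closed set of monomials
satisfying the exchange property. -/
def IsDiscretePolymatroid (Γ : Set (ℕ →₀ ℕ)) : Prop :=
  Γ.Finite ∧
  (∀ m ∈ Γ, ∀ m' : ℕ →₀ ℕ, m' ≤ m → m' ∈ Γ) ∧
  (∀ m ∈ Γ, ∀ m' ∈ Γ, monDeg m' < monDeg m →
    ∃ i, m' i < m i ∧ m' + Finsupp.single i 1 ∈ Γ)

/-- A basis of `Γ`: a maximal element under divisibility. -/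
def IsBasisOf (Γ : Set (ℕ →₀ ℕ)) (m : ℕ →₀ ℕ) : Prop :=
  m ∈ Γ ∧ ∀ m' ∈ Γ, m ≤ m' → m' = m

def PS (b : ℕ →₀ ℕ) (i : ℕ) : ℕ := ∑ j ∈ Finset.range i, b j

lemma PS_add (b c : ℕ →₀ ℕ) (i : ℕ) : PS (b + c) i = PS b i + PS c i := by
  simp [PS, Finset.sum_add_distrib]

lemma PS_single (j i : ℕ) : PS (Finsupp.single j 1) i = if j < i then 1 else 0 := by
  simp [PS, Finsupp.single_apply]

lemma PS_succ (b : ℕ →₀ ℕ) (i : ℕ) : PS b (i+1) = PS b i + b i := by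
  simp [PS, Finset.sum_range_succ]

lemma PS_mono_right (b c : ℕ →₀ ℕ) (h : b ≤ c) (i : ℕ) : PS b i ≤ PS c i :=
  Finset.sum_le_sum fun j _ => h j

lemma monDeg_eq (b : ℕ →₀ ℕ) (n : ℕ) (h : ∀ j, n < j → b j = 0) : monDeg b = PS b (n+1) := by
  unfold monDeg PS
  apply Finsupp.sum_of_support_subset _ _ _ (by simp)
  intro j hj
  simp only [Finset.mem_range]
  by_contra hc
  exact (Finsupp.mem_support_iff.mp hj) (h j (by omega))

structure BS (n r : ℕ) (L U : ℕ → ℕ) (b : ℕ →₀ ℕ) : Prop where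
  supp : ∀ j, n < j → b j = 0
  deg : PS b (n+1) = r
  lo : ∀ i, L i ≤ PS b i
  hi : ∀ i, PS b i ≤ U i

lemma exch {n r : ℕ} {L U : ℕ → ℕ} {b b' : ℕ →₀ ℕ} (hb : BS n r L U b) (hb' : BS n r L U b')
    {i : ℕ} (hi : b' i < b i) :
    ∃ j, b j < b' j ∧ ∃ c : ℕ →₀ ℕ, c + Finsupp.single i 1 = b + Finsupp.single j 1 ∧
      BS n r L U c := by
  have hin : i ≤ n := by
    by_contra hc
    have := hb.supp i (by omega)
    omega
  -- it suffices to find a suitable `j`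
  have key : ∀ j, b j < b' j →
      (∀ k, j < k → k ≤ i → PS b k < PS b' k) → (∀ k, i < k → k ≤ j → PS b' k < PS b k) →
      ∃ j, b j < b' j ∧ ∃ c : ℕ →₀ ℕ, c + Finsupp.single i 1 = b + Finsupp.single j 1 ∧
      BS n r L U c := by
    intro j hj h1 h2
    have hjn : j ≤ n := by
      by_contra hc
      have := hb'.supp j (by omega)
      omega
    have hc : (b - Finsupp.single i 1 + Finsupp.single j 1) + Finsupp.single i 1
        = b + Finsupp.single j 1 := by
      ext k
      simp only [Finsupp.add_apply, Finsupp.tsub_apply, Finsupp.single_apply]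
      split_ifs <;> subst_vars <;> omega
    refine ⟨j, hj, _, hc, ?_⟩
    generalize b - Finsupp.single i 1 + Finsupp.single j 1 = c at hc
    have hP : ∀ k, PS c k + (if i < k then 1 else 0) = PS b k + (if j < k then 1 else 0) := by
      intro k
      rw [← PS_single, ← PS_single, ← PS_add, ← PS_add, hc]
    refine ⟨?_, ?_, ?_, ?_⟩
    · intro k hk
      have h := DFunLike.congr_fun hc k
      simp only [Finsupp.add_apply, Finsupp.single_apply] at h
      have := hb.supp k hk
      rw [if_neg (by omega), if_neg (by omega)] at h
      omega
    · have h := hP (n+1)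
      rw [if_pos (by omega), if_pos (by omega)] at h
      have := hb.deg
      omega
    · intro k
      have h := hP k
      have := hb.lo k
      have := hb'.lo k
      have := h2 k
      split_ifs at h <;> omega
    · intro k
      have h := hP k
      have := hb.hi k
      have := hb'.hi k
      have := h1 k
      split_ifs at h <;> omega
  have e1 := PS_succ b i
  have e2 := PS_succ b' i
  by_cases hD : PS b' (i+1) < PS b (i+1)
  · have hex : ∃ t, PS b (i+1+t) ≤ PS b' (i+1+t) := by
      refine ⟨n - i, ?_⟩
      have : i + 1 + (n - i) = n + 1 := by omega
      rw [this, hb.deg, hb'.deg]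
    classical
    obtain ⟨t, ht, hmin⟩ : ∃ t, PS b (i+1+t) ≤ PS b' (i+1+t) ∧
        ∀ s < t, ¬ PS b (i+1+s) ≤ PS b' (i+1+s) :=
      ⟨Nat.find hex, Nat.find_spec hex, fun s hs => Nat.find_min hex hs⟩
    have ht0 : t ≠ 0 := by
      rintro rfl
      simp only [add_zero] at ht
      omega
    have hlt : ∀ k, i < k → k ≤ i + t → PS b' k < PS b k := by
      intro k h1 h2
      have := hmin (k - (i+1)) (by omega)
      rw [show i + 1 + (k - (i+1)) = k by omega] at this
      omega
    refine key (i+t) ?_ (fun k h1 h2 => by omega) hlt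
    have := hlt (i+t) (by omega) le_rfl
    have h3 := PS_succ b (i+t)
    have h4 := PS_succ b' (i+t)
    rw [show i + 1 + t = i + t + 1 by omega] at ht
    omega
  · have hD' : PS b i < PS b' i := by omega
    have hex : ∃ t, PS b' (i-t) ≤ PS b (i-t) := ⟨i, by simp [PS]⟩
    obtain ⟨t, ht, hmin⟩ : ∃ t, PS b' (i-t) ≤ PS b (i-t) ∧
        ∀ s < t, ¬ PS b' (i-s) ≤ PS b (i-s) :=
      ⟨Nat.find hex, Nat.find_spec hex, fun s hs => Nat.find_min hex hs⟩
    have ht0 : t ≠ 0 := by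
      rintro rfl
      simp only [Nat.sub_zero] at ht
      omega
    have hti : t ≤ i := by
      by_contra hc
      apply hmin i (by omega)
      simp [PS]
    have hlt : ∀ k, i - t < k → k ≤ i → PS b k < PS b' k := by
      intro k h1 h2
      have := hmin (i - k) (by omega)
      rw [show i - (i - k) = k by omega] at this
      omega
    refine key (i-t) ?_ hlt (fun k h1 h2 => by omega)
    have := hlt (i-t+1) (by omega) (by omega)
    have h3 := PS_succ b (i-t)
    have h4 := PS_succ b' (i-t)
    omega

def dist2 (n : ℕ) (b b' : ℕ →₀ ℕ) : ℕ :=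
  ∑ j ∈ Finset.range (n+1), ((b j - b' j) + (b' j - b j))

lemma dist2_comm (n : ℕ) (b b' : ℕ →₀ ℕ) : dist2 n b b' = dist2 n b' b := by
  unfold dist2
  exact Finset.sum_congr rfl fun _ _ => Nat.add_comm _ _

lemma dist2_lt {n : ℕ} {b b' c : ℕ →₀ ℕ} {i j : ℕ} (hi : b' i < b i) (hj : b j < b' j)
    (hn : i ≤ n)
    (hc : c + Finsupp.single i 1 = b + Finsupp.single j 1) : dist2 n c b' < dist2 n b b' := by
  have h : ∀ k, c k + (if i = k then 1 else 0) = b k + (if j = k then 1 else 0) := by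
    intro k
    have h := DFunLike.congr_fun hc k
    simpa only [Finsupp.add_apply, Finsupp.single_apply] using h
  apply Finset.sum_lt_sum
  · intro k _
    have := h k
    split_ifs at this <;> subst_vars <;> omega
  · refine ⟨i, by simp; omega, ?_⟩
    have := h i
    split_ifs at this <;> subst_vars <;> omega

lemma augment {n r : ℕ} {L U : ℕ → ℕ} {m m' : ℕ →₀ ℕ} (hlt : PS m' (n+1) < PS m (n+1)) (d : ℕ) :
    ∀ b b' : ℕ →₀ ℕ, BS n r L U b → BS n r L U b' → m ≤ b → m' ≤ b' → dist2 n b b' = d →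
    ∃ i, m' i < m i ∧ ∃ c, BS n r L U c ∧ m' + Finsupp.single i 1 ≤ c := by
  induction d using Nat.strong_induction_on with
  | _ d ih =>
  intro b b' hb hb' hm hm' hd
  have step : ∀ {b b' m : ℕ →₀ ℕ}, BS n r L U b → BS n r L U b' → m ≤ b →
      ∀ i, b' i < b i → m i < b i → ∃ c, BS n r L U c ∧ m ≤ c ∧ dist2 n c b' < dist2 n b b' := by
    intro b b' m hb hb' hm i hi hmi
    obtain ⟨j, hj, c, hc, hcB⟩ := exch hb hb' hi
    have hin : i ≤ n := by
      by_contra hc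
      have := hb.supp i (by omega)
      omega
    refine ⟨c, hcB, ?_, dist2_lt hi hj hin hc⟩
    intro k
    have h := DFunLike.congr_fun hc k
    simp only [Finsupp.add_apply, Finsupp.single_apply] at h
    have := hm k
    split_ifs at h <;> subst_vars <;> omega
  by_cases h1 : ∃ i, b' i < b i ∧ m i < b i
  · obtain ⟨i, hi, hmi⟩ := h1
    obtain ⟨c, hc, hmc, hdc⟩ := step hb hb' hm i hi hmi
    exact ih _ (by omega) c b' hc hb' hmc hm' rfl
  by_cases h2 : ∃ i, b i < b' i ∧ m' i < b' i
  · obtain ⟨i, hi, hmi⟩ := h2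
    obtain ⟨c, hc, hmc, hdc⟩ := step hb' hb hm' i hi hmi
    rw [dist2_comm, dist2_comm n b' b] at hdc
    exact ih _ (by omega) b c hb hc hm hmc rfl
  by_cases h3 : ∃ i, m' i < m i ∧ m' i < b' i
  · obtain ⟨i, hi, hi'⟩ := h3
    refine ⟨i, hi, b', hb', ?_⟩
    intro k
    have := hm' k
    simp only [Finsupp.add_apply, Finsupp.single_apply]
    split_ifs <;> subst_vars <;> omega
  exfalso
  push Not at h1 h2 h3
  have hle : m + b' ≤ m' + b := by
    intro k
    have := h1 k
    have := h2 k
    have := h3 k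
    have := hm k
    have := hm' k
    simp only [Finsupp.add_apply]
    omega
  have := PS_mono_right _ _ hle (n+1)
  rw [PS_add, PS_add, hb.deg, hb'.deg] at this
  omega

/-! correspondence with paths -/

lemma eastBefore_seq {r : ℕ} (a : Fin r → ℕ) (ha : StrictMono a) (h1 : ∀ k, 1 ≤ a k) (k : Fin r) :
    eastBefore (Finset.univ.image a) (a k) + k + 1 = a k := by
  unfold eastBefore
  have h := Finset.card_filter_add_card_filter_not (s := Finset.Icc 1 (a k - 1))
    (fun b => b ∈ Finset.univ.image a)
  have h2 : ((Finset.Icc 1 (a k - 1)).filter (fun b => b ∈ Finset.univ.image a)) =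
      (Finset.Iio k).image a := by
    ext x
    simp only [Finset.mem_filter, Finset.mem_Icc, Finset.mem_image, Finset.mem_univ, true_and,
      Finset.mem_Iio]
    constructor
    · rintro ⟨⟨hx1, hx2⟩, l, rfl⟩
      refine ⟨l, ha.lt_iff_lt.mp ?_, rfl⟩
      have := h1 k
      omega
    · rintro ⟨l, hl, rfl⟩
      have := ha hl
      exact ⟨⟨h1 l, by omega⟩, l, rfl⟩
  rw [h2, Finset.card_image_of_injective _ ha.injective, Fin.card_Iio, Nat.card_Icc] at h
  have := h1 k
  omega

lemma pathMonomial_seq {r : ℕ} (c : Fin r → ℕ) (hc : Monotone c) :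
    pathMonomial (Finset.univ.image fun k : Fin r => c k + k + 1) =
      ∑ k, Finsupp.single (c k) 1 := by
  have ha : StrictMono (fun k : Fin r => c k + k + 1) := by
    intro k l hkl
    have := hc hkl.le
    have : (k : ℕ) < l := hkl
    simp only
    omega
  unfold pathMonomial
  rw [Finset.sum_image (fun x _ y _ h => ha.injective h)]
  refine Finset.sum_congr rfl fun k _ => ?_
  have := eastBefore_seq _ ha (fun k => by omega) k
  congr 1
  omega

lemma exists_seq {n r : ℕ} {σ : Finset ℕ} (h : IsLatticePath n r σ) :
    ∃ c : Fin r → ℕ, Monotone c ∧ (∀ k, c k ≤ n) ∧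
      σ = Finset.univ.image fun k : Fin r => c k + k + 1 := by
  obtain ⟨hs, hcard⟩ := h
  have ha := (σ.orderEmbOfFin hcard).strictMono
  have himg : Finset.univ.image (σ.orderEmbOfFin hcard) = σ := by
    simp
  generalize (σ.orderEmbOfFin hcard : Fin r → ℕ) = a at ha himg
  have hmem : ∀ k, 1 ≤ a k ∧ a k ≤ n + r := by
    intro k
    have : a k ∈ σ := by
      rw [← himg]; simp
    simpa using hs this
  have hE := eastBefore_seq a ha (fun k => (hmem k).1)
  rw [himg] at hE
  have hstep : ∀ (d : ℕ) (k l : Fin r), (l : ℕ) = k + d → a k + d ≤ a l := by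
    intro d
    induction d with
    | zero =>
      intro k l h
      have : l = k := Fin.ext (by omega)
      simp [this]
    | succ d ih =>
      intro k l h
      have := ih k ⟨k + d, by omega⟩ rfl
      have h2 : a ⟨k + d, by omega⟩ < a l := ha (by
        rw [Fin.lt_def]; simp only; omega)
      omega
  refine ⟨fun k => eastBefore σ (a k), ?_, ?_, ?_⟩
  · intro k l hkl
    have hkl' : (k : ℕ) ≤ l := hkl
    have := hstep (l - k) k l (by omega)
    have := hE k
    have := hE l
    simp only
    omega
  · intro k
    have := hE k
    have h3 := hstep (r - 1 - k) k ⟨r - 1, by omega⟩ (by simp only; omega)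
    have := (hmem ⟨r - 1, by omega⟩).2
    have := k.2
    simp only
    omega
  · conv_lhs => rw [← himg]
    congr 1
    funext k
    exact (hE k).symm

lemma path_of_seq {n r : ℕ} (c : Fin r → ℕ) (hc : Monotone c) (hn : ∀ k, c k ≤ n) :
    IsLatticePath n r (Finset.univ.image fun k : Fin r => c k + k + 1) := by
  constructor
  · intro x hx
    simp only [Finset.mem_image, Finset.mem_univ, true_and] at hx
    obtain ⟨k, rfl⟩ := hx
    have := hn k
    have := k.2
    simp only [Finset.mem_Icc]
    omega
  · rw [Finset.card_image_of_injective, Finset.card_fin]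
    apply StrictMono.injective
    intro k l hkl
    have := hc hkl.le
    have : (k : ℕ) < l := hkl
    simp only
    omega

lemma sort_seq {r : ℕ} (c : Fin r → ℕ) (hc : Monotone c) :
    (Finset.univ.image fun k : Fin r => c k + k + 1).sort (· ≤ ·) =
      List.ofFn fun k : Fin r => c k + k + 1 := by
  have ha : StrictMono (fun k : Fin r => c k + k + 1) := by
    intro k l hkl
    have := hc hkl.le
    have : (k : ℕ) < l := hkl
    simp only
    omega
  have h1 : (List.ofFn fun k : Fin r => c k + k + 1).SortedLT := ha.sortedLT_ofFn
  have h2 := h1.nodup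
  have h3 : (Finset.univ.image fun k : Fin r => c k + k + 1) =
      (List.ofFn fun k : Fin r => c k + k + 1).toFinset := by
    ext x; simp [List.mem_ofFn]
  rw [h3]
  exact (List.toFinset_sort (· ≤ ·) h2).mpr h1.sortedLE.pairwise

lemma above_seq {r : ℕ} (c d : Fin r → ℕ) (hc : Monotone c) (hd : Monotone d) :
    PathAbove (Finset.univ.image fun k : Fin r => c k + k + 1)
      (Finset.univ.image fun k : Fin r => d k + k + 1) ↔ ∀ k, c k ≤ d k := by
  unfold PathAbove
  rw [sort_seq c hc, sort_seq d hd]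
  simp only [List.get_ofFn, List.length_ofFn]
  constructor
  · intro h k
    have := h k k.2 k.2
    simpa using this
  · intro h k h1 h2
    simpa using h ⟨k, h1⟩

lemma PS_seq {r : ℕ} (c : Fin r → ℕ) (i : ℕ) :
    PS (∑ k, Finsupp.single (c k) 1) i = (Finset.univ.filter fun k => c k < i).card := by
  have : PS (∑ k, Finsupp.single (c k) 1) i = ∑ k, PS (Finsupp.single (c k) 1) i := by
    unfold PS
    rw [Finset.sum_comm]
    simp
  rw [this, Finset.card_filter]
  exact Finset.sum_congr rfl fun k _ => PS_single _ _

lemma le_seq_iff {r : ℕ} (c d : Fin r → ℕ) (hc : Monotone c) (hd : Monotone d) :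
    (∀ k, c k ≤ d k) ↔ ∀ i, PS (∑ k, Finsupp.single (d k) 1) i ≤
      PS (∑ k, Finsupp.single (c k) 1) i := by
  simp only [PS_seq]
  constructor
  · intro h i
    apply Finset.card_le_card
    intro k
    have := h k
    simp only [Finset.mem_filter, Finset.mem_univ, true_and]
    omega
  · intro h k
    by_contra hk
    have h1 : (Finset.Iic k).card ≤ (Finset.univ.filter fun l => d l < c k).card := by
      apply Finset.card_le_card
      intro l hl
      have := hd (Finset.mem_Iic.mp hl)
      simp only [Finset.mem_filter, Finset.mem_univ, true_and]
      omega
    have h2 : (Finset.univ.filter fun l => c l < c k).card ≤ (Finset.Iio k).card := by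
      apply Finset.card_le_card
      intro l hl
      simp only [Finset.mem_filter, Finset.mem_univ, true_and] at hl
      rw [Finset.mem_Iio]
      by_contra hlk
      have := hc (not_lt.mp hlk)
      omega
    have := h (c k)
    rw [Fin.card_Iic] at h1
    rw [Fin.card_Iio] at h2
    omega

lemma above_iff {n r : ℕ} {σ τ : Finset ℕ} (hσ : IsLatticePath n r σ) (hτ : IsLatticePath n r τ) :
    PathAbove σ τ ↔ ∀ i, PS (pathMonomial τ) i ≤ PS (pathMonomial σ) i := by
  obtain ⟨c, hc, -, rfl⟩ := exists_seq hσ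
  obtain ⟨d, hd, -, rfl⟩ := exists_seq hτ
  rw [above_seq c d hc hd, pathMonomial_seq c hc, pathMonomial_seq d hd, le_seq_iff c d hc hd]

lemma path_supp {n r : ℕ} {σ : Finset ℕ} (hσ : IsLatticePath n r σ) :
    ∀ j, n < j → pathMonomial σ j = 0 := by
  obtain ⟨c, hc, hn, rfl⟩ := exists_seq hσ
  intro j hj
  rw [pathMonomial_seq c hc, Finsupp.finsetSum_apply]
  apply Finset.sum_eq_zero
  intro k _
  have := hn k
  rw [Finsupp.single_apply, if_neg (by omega)]

lemma path_deg {n r : ℕ} {σ : Finset ℕ} (hσ : IsLatticePath n r σ) :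
    PS (pathMonomial σ) (n+1) = r := by
  obtain ⟨c, hc, hn, rfl⟩ := exists_seq hσ
  rw [pathMonomial_seq c hc, PS_seq, Finset.filter_true_of_mem, Finset.card_fin]
  intro k _
  have := hn k
  omega

lemma exists_path {n r : ℕ} {b : ℕ →₀ ℕ} (h : ∀ j, n < j → b j = 0) (hd : PS b (n+1) = r) :
    ∃ σ, IsLatticePath n r σ ∧ pathMonomial σ = b := by
  have hlen : ((Finsupp.toMultiset b).sort (· ≤ ·)).length = r := by
    rw [Multiset.length_sort, Finsupp.card_toMultiset, ← hd, ← monDeg_eq b n h]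
    rfl
  subst hlen
  set l := (Finsupp.toMultiset b).sort (· ≤ ·) with hl
  have hs : l.Pairwise (· ≤ ·) := Multiset.pairwise_sort _ _
  have hc : Monotone l.get := hs.sortedLE.monotone_get
  have hn : ∀ k, l.get k ≤ n := by
    intro k
    have hm : ∀ x ∈ l, x ∈ (Finsupp.toMultiset b).sort (· ≤ ·) := fun x hx => hx
    replace hm := hm _ (l.get_mem k)
    rw [Multiset.mem_sort, Finsupp.mem_toMultiset, Finsupp.mem_support_iff] at hm
    by_contra hk
    exact hm (h _ (by omega))
  refine ⟨_, path_of_seq l.get hc hn, ?_⟩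
  rw [pathMonomial_seq _ hc]
  apply (Function.LeftInverse.injective (g := Multiset.toFinsupp) Finsupp.toMultiset_toFinsupp)
  rw [map_sum]
  simp only [Finsupp.toMultiset_single, one_smul]
  have h1 : (l : Multiset ℕ) = Finsupp.toMultiset b := Multiset.sort_eq _ _
  rw [← h1]
  have h2 : ∑ k, ({l.get k} : Multiset ℕ) = (List.ofFn fun k => ({l.get k} : Multiset ℕ)).sum :=
    (List.sum_ofFn).symm
  rw [h2]
  have h3 : (List.ofFn fun k => ({l.get k} : Multiset ℕ)) = l.map fun x => {x} := by
    conv_rhs => rw [← List.ofFn_get l]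
    rw [List.map_ofFn]
    rfl
  rw [h3]
  clear_value l
  clear * -
  induction l with
  | nil => rfl
  | cons x l ih => 
    rw [List.map_cons, List.sum_cons, ih]
    rfl

lemma basis_iff {n r : ℕ} {α ω : Finset ℕ} (hα : IsLatticePath n r α) (hω : IsLatticePath n r ω)
    (b : ℕ →₀ ℕ) :
    BS n r (PS (pathMonomial ω)) (PS (pathMonomial α)) b ↔
    ∃ σ, IsLatticePath n r σ ∧ PathAbove α σ ∧ PathAbove σ ω ∧ b = pathMonomial σ := by
  constructor
  · intro h
    obtain ⟨σ, hσ, rfl⟩ := exists_path h.supp h.deg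
    exact ⟨σ, hσ, (above_iff hα hσ).mpr h.hi, (above_iff hσ hω).mpr h.lo, rfl⟩
  · rintro ⟨σ, hσ, h1, h2, rfl⟩
    exact ⟨path_supp hσ, path_deg hσ, (above_iff hσ hω).mp h2, (above_iff hα hσ).mp h1⟩

/-- The set of all monomials dividing some `m(σ)` with `α ⪰ σ ⪰ ω` is a
discrete polymatroid of rank `r`, whose bases are exactly the monomials `m(σ)`
for lattice paths `σ` with `α ⪰ σ ⪰ ω`. -/
theorem stmt11 (n r : ℕ) (hn : 0 < n) (hr : 0 < r) (α ω : Finset ℕ)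
    (hα : IsLatticePath n r α) (hω : IsLatticePath n r ω) (hαω : PathAbove α ω) :
    IsDiscretePolymatroid
      {m : ℕ →₀ ℕ | ∃ σ, IsLatticePath n r σ ∧ PathAbove α σ ∧ PathAbove σ ω ∧
        m ≤ pathMonomial σ} ∧
    (∀ m : ℕ →₀ ℕ,
      IsBasisOf {m : ℕ →₀ ℕ | ∃ σ, IsLatticePath n r σ ∧ PathAbove α σ ∧ PathAbove σ ω ∧
        m ≤ pathMonomial σ} m ↔ IsLPBasis n r α ω m) ∧
    (∀ m : ℕ →₀ ℕ,
      IsBasisOf {m : ℕ →₀ ℕ | ∃ σ, IsLatticePath n r σ ∧ PathAbove α σ ∧ PathAbove σ ω ∧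
        m ≤ pathMonomial σ} m → monDeg m = r) := by
  have hmem : ∀ m : ℕ →₀ ℕ, (∃ σ, IsLatticePath n r σ ∧ PathAbove α σ ∧ PathAbove σ ω ∧
        m ≤ pathMonomial σ) ↔
        ∃ b, BS n r (PS (pathMonomial ω)) (PS (pathMonomial α)) b ∧ m ≤ b := by
    intro m
    constructor
    · rintro ⟨σ, h1, h2, h3, h4⟩
      exact ⟨_, (basis_iff hα hω _).mpr ⟨σ, h1, h2, h3, rfl⟩, h4⟩
    · rintro ⟨b, hb, h⟩
      obtain ⟨σ, h1, h2, h3, rfl⟩ := (basis_iff hα hω _).mp hb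
      exact ⟨σ, h1, h2, h3, h⟩
  have hB : ∀ m : ℕ →₀ ℕ,
      IsBasisOf {m : ℕ →₀ ℕ | ∃ σ, IsLatticePath n r σ ∧ PathAbove α σ ∧ PathAbove σ ω ∧
        m ≤ pathMonomial σ} m ↔ IsLPBasis n r α ω m := by
    intro m
    unfold IsBasisOf IsLPBasis
    simp only [Set.mem_ofPred_eq]
    constructor
    · rintro ⟨⟨σ, h1, h2, h3, h4⟩, h5⟩
      exact ⟨σ, h1, h2, h3, (h5 _ ⟨σ, h1, h2, h3, le_rfl⟩ h4).symm⟩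
    · rintro ⟨σ, h1, h2, h3, rfl⟩
      refine ⟨⟨σ, h1, h2, h3, le_rfl⟩, ?_⟩
      rintro m' ⟨τ, g1, g2, g3, g4⟩ hle
      have hle2 := hle.trans g4
      have heq : ∀ j ∈ Finset.range (n+1), pathMonomial σ j = pathMonomial τ j := by
        apply (Finset.sum_eq_sum_iff_of_le fun j _ => hle2 j).mp
        exact (path_deg h1).trans (path_deg g1).symm
      have : pathMonomial σ = pathMonomial τ := by
        ext j
        by_cases hj : j < n + 1
        · exact heq j (Finset.mem_range.mpr hj)
        · rw [path_supp h1 j (by omega), path_supp g1 j (by omega)]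
      rw [← this] at g4
      exact le_antisymm g4 hle
  have hsupp : ∀ m b : ℕ →₀ ℕ, BS n r (PS (pathMonomial ω)) (PS (pathMonomial α)) b → m ≤ b →
      ∀ j, n < j → m j = 0 := by
    intro m b hb h j hj
    have h1 := h j
    have := hb.supp j hj
    omega
  refine ⟨⟨?_, ?_, ?_⟩, hB, ?_⟩
  · have hfin : ((Finset.Icc 1 (n + r)).powerset : Set (Finset ℕ)).Finite := Finset.finite_toSet _
    refine (hfin.biUnion (t := fun σ => Set.Iic (pathMonomial σ))
      fun σ _ => Set.finite_Iic _).subset ?_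
    rintro m ⟨σ, h1, -, -, h4⟩
    simp only [Set.mem_iUnion]
    exact ⟨σ, Finset.mem_coe.mpr (Finset.mem_powerset.mpr h1.1), h4⟩
  · rintro m ⟨σ, h1, h2, h3, h4⟩ m' hm'
    exact ⟨σ, h1, h2, h3, hm'.trans h4⟩
  · intro m hm m' hm' hlt
    obtain ⟨b, hb, hmb⟩ := (hmem m).mp hm
    obtain ⟨b', hb', hmb'⟩ := (hmem m').mp hm'
    rw [monDeg_eq _ n (hsupp _ _ hb hmb), monDeg_eq _ n (hsupp _ _ hb' hmb')] at hlt
    obtain ⟨i, hi, c, hc, hle⟩ := augment hlt _ b b' hb hb' hmb hmb' rfl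
    exact ⟨i, hi, (hmem _).mpr ⟨c, hc, hle⟩⟩
  · intro m hm
    obtain ⟨σ, h1, -, -, rfl⟩ := (hB m).mp hm
    rw [monDeg_eq _ n (path_supp h1), path_deg h1]
end

section
/- Let Γ be a discrete polymatroid, let m and m' be bases of Γ, and let i be an index with d_i(m) > d_i(m'). Then there exists an index j with d_j(m) < d_j(m') such that both m − e_i + e_j and m' + e_i − e_j are bases of Γ. -/
theorem monDeg_add (a b : ℕ →₀ ℕ) : monDeg (a + b) = monDeg a + monDeg b := by
  unfold monDeg
  exact Finsupp.sum_add_index' (fun _ => rfl) (fun _ _ _ => rfl)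

theorem monDeg_single (i : ℕ) : monDeg (Finsupp.single i 1) = 1 := by
  simp [monDeg]

theorem monDeg_mono {a b : ℕ →₀ ℕ} (h : a ≤ b) : monDeg a ≤ monDeg b := by
  obtain ⟨c, rfl⟩ := exists_add_of_le h
  rw [monDeg_add]; omega

theorem eq_of_monDeg {a b : ℕ →₀ ℕ} (h : a ≤ b) (hd : monDeg b ≤ monDeg a) : a = b := by
  obtain ⟨c, rfl⟩ := exists_add_of_le h
  rw [monDeg_add] at hd
  have hc : monDeg c = 0 := by omega
  have : c = 0 := by
    ext k
    by_contra hk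
    have h1 : Finsupp.single k 1 ≤ c := by
      rw [Finsupp.single_le_iff]
      simp at hk; omega
    have := monDeg_mono h1
    rw [monDeg_single] at this
    omega
  simp [this]

theorem poly_extend {Γ : Set (ℕ →₀ ℕ)} (hΓ : IsDiscretePolymatroid Γ) (b : ℕ →₀ ℕ) (hb : b ∈ Γ) :
    ∀ (n : ℕ) (a : ℕ →₀ ℕ), a ∈ Γ → monDeg a + n = monDeg b →
      ∃ a' ∈ Γ, a ≤ a' ∧ a' ≤ a ⊔ b ∧ monDeg a' = monDeg b := by
  intro n
  induction n with
  | zero => intro a ha h; exact ⟨a, ha, le_rfl, le_sup_left, by omega⟩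
  | succ n ih =>
    intro a ha h
    obtain ⟨k, hk, hk'⟩ := hΓ.2.2 b hb a ha (by omega)
    obtain ⟨a', h1, h2, h3, h4⟩ := ih _ hk' (by rw [monDeg_add, monDeg_single]; omega)
    refine ⟨a', h1, le_trans (by simp) h2, h3.trans ?_, h4⟩
    intro l
    simp only [Finsupp.sup_apply, Finsupp.add_apply, Finsupp.single_apply]
    split_ifs with hkl
    · subst hkl; simp; omega
    · simp

theorem basis_deg {Γ : Set (ℕ →₀ ℕ)} (hΓ : IsDiscretePolymatroid Γ) {m a : ℕ →₀ ℕ}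
    (hm : IsBasisOf Γ m) (ha : a ∈ Γ) : monDeg a ≤ monDeg m := by
  by_contra h
  obtain ⟨k, hk, hk'⟩ := hΓ.2.2 a ha m hm.1 (by omega)
  have := congrArg monDeg (hm.2 _ hk' (by simp))
  rw [monDeg_add, monDeg_single] at this
  omega

theorem basis_of_deg {Γ : Set (ℕ →₀ ℕ)} (hΓ : IsDiscretePolymatroid Γ) {m a : ℕ →₀ ℕ}
    (hm : IsBasisOf Γ m) (ha : a ∈ Γ) (hd : monDeg a = monDeg m) : IsBasisOf Γ a :=
  ⟨ha, fun b hb hab => (eq_of_monDeg hab (by have := basis_deg hΓ hm hb; omega)).symm⟩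

/-- The symmetric exchange property for discrete polymatroids: if `m, m'` are
bases and `d_i(m) > d_i(m')`, then there is `j` with `d_j(m) < d_j(m')` such
that `m - e_i + e_j` and `m' + e_i - e_j` are both bases. -/
theorem stmt12 (Γ : Set (ℕ →₀ ℕ)) (hΓ : IsDiscretePolymatroid Γ)
    (m m' : ℕ →₀ ℕ) (hm : IsBasisOf Γ m) (hm' : IsBasisOf Γ m')
    (i : ℕ) (hi : m' i < m i) :
    ∃ j, m j < m' j ∧
      IsBasisOf Γ (m - Finsupp.single i 1 + Finsupp.single j 1) ∧
      IsBasisOf Γ (m' + Finsupp.single i 1 - Finsupp.single j 1) := by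
  classical
  have hdeg : monDeg m = monDeg m' :=
    le_antisymm (basis_deg hΓ hm' hm.1) (basis_deg hΓ hm hm'.1)
  let P : ℕ → Prop := fun j => j = i ∨ m' + Finsupp.single i 1 - Finsupp.single j 1 ∈ Γ
  let c : ℕ →₀ ℕ := m'.filter P
  have hcP : ∀ j, P j → c j = m' j := fun j hj => Finsupp.filter_apply_pos _ _ hj
  have hcN : ∀ j, ¬ P j → c j = 0 := fun j hj => Finsupp.filter_apply_neg _ _ hj
  have hcle : c ≤ m' := by
    intro j
    by_cases hj : P j
    · rw [hcP j hj]
    · rw [hcN j hj]; exact Nat.zero_le _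
  have hPi : P i := Or.inl rfl
  -- c + e_i is not in Γ
  have hc : c + Finsupp.single i 1 ∉ Γ := by
    intro hmem
    have hd := basis_deg hΓ hm' hmem
    obtain ⟨c', h1, h2, h3, h4⟩ := poly_extend hΓ m' hm'.1
      (monDeg m' - monDeg (c + Finsupp.single i 1)) _ hmem (by omega)
    have hle : c' ≤ m' + Finsupp.single i 1 :=
      h3.trans (sup_le (add_le_add_left hcle _) (by simp))
    have hex : ∃ j, c' j < (m' + Finsupp.single i 1 : ℕ →₀ ℕ) j := by
      by_contra hcon
      push Not at hcon
      have : m' + Finsupp.single i 1 ≤ c' := hcon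
      have := monDeg_mono this
      rw [monDeg_add, monDeg_single] at this
      omega
    obtain ⟨j, hj⟩ := hex
    have hle2 : c' + Finsupp.single j 1 ≤ m' + Finsupp.single i 1 := by
      intro l
      have := hle l
      by_cases hl : j = l
      · subst hl
        simpa using hj
      · simpa [Finsupp.single_apply, hl] using this
    have heq := eq_of_monDeg hle2 (by simp only [monDeg_add, monDeg_single]; omega)
    have hPj : P j := by
      right
      rw [← heq]
      simpa using h1
    have h5 := h2 j
    simp only [Finsupp.add_apply] at h5 hj
    rw [hcP j hPj] at h5
    omega
  have hcΓ : c ∈ Γ := hΓ.2.1 _ hm'.1 _ hcle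
  have hcd := monDeg_mono hcle
  obtain ⟨v, v1, v2, v3, v4⟩ := poly_extend hΓ m hm.1 (monDeg m - monDeg c) c hcΓ (by omega)
  have hvi : v i ≤ m' i := by
    by_contra hcon
    apply hc
    refine hΓ.2.1 _ v1 _ ?_
    intro l
    have := v2 l
    by_cases hl : i = l
    · subst hl
      simp [hcP i hPi]; omega
    · simpa [Finsupp.single_apply, hl] using this
  have hsub : m - Finsupp.single i 1 + Finsupp.single i 1 = m := by
    apply tsub_add_cancel_of_le
    rw [Finsupp.single_le_iff]; omega
  have hsd := congrArg monDeg hsub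
  rw [monDeg_add, monDeg_single] at hsd
  obtain ⟨j, hj, hjΓ⟩ := hΓ.2.2 v v1 (m - Finsupp.single i 1)
    (hΓ.2.1 _ hm.1 _ tsub_le_self) (by omega)
  have hji : i ≠ j := by
    rintro rfl
    simp at hj
    omega
  have hj' : m j < v j := by simpa [Finsupp.single_apply, hji] using hj
  have h3 := v3 j
  simp only [Finsupp.sup_apply] at h3
  have h4 : m j < c j := by
    rcases le_sup_iff.mp h3 with h | h <;> omega
  have hPj : P j := by
    by_contra hn
    rw [hcN j hn] at h4
    omega
  rw [hcP j hPj] at h4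
  have hmem : m' + Finsupp.single i 1 - Finsupp.single j 1 ∈ Γ := by
    rcases hPj with h | h
    · exact absurd h.symm hji
    · exact h
  refine ⟨j, h4, basis_of_deg hΓ hm hjΓ (by rw [monDeg_add, monDeg_single]; omega),
    basis_of_deg hΓ hm' hmem ?_⟩
  have hsub2 : m' + Finsupp.single i 1 - Finsupp.single j 1 + Finsupp.single j 1
      = m' + Finsupp.single i 1 := by
    apply tsub_add_cancel_of_le
    rw [Finsupp.single_le_iff]
    simp only [Finsupp.add_apply]; omega
  have hsd2 := congrArg monDeg hsub2
  simp only [monDeg_add, monDeg_single] at hsd2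
  omega
end

section
/- Let α ⪰ ω be lattice paths from (0,0) to (n,r). For a lattice path σ to (n,r) with N(σ) = {a_1 < a_2 < ⋯ < a_r}, let σ̄ be the lattice path to (n+r, r) with N(σ̄) = {a_1 + 1, a_2 + 2, …, a_r + r}. Then (i) m(σ̄) = x_{a_1} x_{a_2} ⋯ x_{a_r}, i.e., the exponent vector of m(σ̄) is the indicator function of N(σ); and (ii) a lattice path τ to (n+r, r) with ᾱ ⪰ τ ⪰ ω̄ is equal to σ̄ for some lattice path σ with α ⪰ σ ⪰ ω if and only if m(τ) is squarefree (every exponent of m(τ) is at most 1). In particular σ ↦ σ̄ is a bijection from {σ : α ⪰ σ ⪰ ω} onto the set of paths τ with ᾱ ⪰ τ ⪰ ω̄ and m(τ) squarefree. -/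
/-- The path `σ̄`: if `N(σ) = {a_1 < a_2 < ⋯ < a_r}`, then
`N(σ̄) = {a_1 + 1, a_2 + 2, …, a_r + r}`. -/
def barPath (σ : Finset ℕ) : Finset ℕ :=
  ((σ.sort (· ≤ ·)).mapIdx fun k a => a + k + 1).toFinset

theorem sortP {r : ℕ} (f : Fin r → ℕ) (hf : StrictMono f) :
    (Finset.univ.image f).sort (· ≤ ·) = List.ofFn f := by
  have h1 : (List.ofFn f).toFinset = Finset.univ.image f := by
    ext x; simp [List.mem_ofFn]
  rw [← h1]
  apply (List.toFinset_sort (· ≤ ·) (List.nodup_ofFn.2 hf.injective)).2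
  exact List.pairwise_ofFn.2 fun i j h => (hf h).le

theorem existsP {r : ℕ} (S : Finset ℕ) (h : S.card = r) :
    ∃ f : Fin r → ℕ, StrictMono f ∧ S = Finset.univ.image f :=
  ⟨S.orderEmbOfFin h, (S.orderEmbOfFin h).strictMono, by simp⟩

theorem injP {r : ℕ} (f g : Fin r → ℕ) (hf : StrictMono f) (hg : StrictMono g)
    (h : Finset.univ.image f = Finset.univ.image g) : f = g := by
  have := sortP f hf
  rw [h, sortP g hg] at this
  exact (List.ofFn_injective this).symm

theorem aboveP {r : ℕ} (f g : Fin r → ℕ) (hf : StrictMono f) (hg : StrictMono g) :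
    PathAbove (Finset.univ.image f) (Finset.univ.image g) ↔ ∀ k, f k ≤ g k := by
  unfold PathAbove
  rw [sortP f hf, sortP g hg]
  simp only [List.length_ofFn, List.get_eq_getElem, List.getElem_ofFn]
  exact ⟨fun h k => h k k.2 k.2, fun h k h1 _ => h ⟨k, h1⟩⟩

theorem pathP {r n : ℕ} (f : Fin r → ℕ) (hf : StrictMono f) :
    IsLatticePath n r (Finset.univ.image f) ↔ ∀ k, 1 ≤ f k ∧ f k ≤ n + r := by
  unfold IsLatticePath
  rw [Finset.card_image_of_injective _ hf.injective]
  simp [Finset.subset_iff]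

theorem barP {r : ℕ} (f : Fin r → ℕ) (hf : StrictMono f) :
    barPath (Finset.univ.image f) = Finset.univ.image (fun k : Fin r => f k + k + 1) := by
  unfold barPath
  rw [sortP f hf]
  ext x
  simp only [List.mem_toFinset, List.mem_mapIdx, List.length_ofFn, List.getElem_ofFn,
    Finset.mem_image, Finset.mem_univ, true_and]
  exact ⟨fun ⟨i, h, e⟩ => ⟨⟨i, h⟩, e⟩, fun ⟨i, e⟩ => ⟨i, i.2, e⟩⟩

theorem barMono {r : ℕ} (f : Fin r → ℕ) (hf : StrictMono f) :
    StrictMono (fun k : Fin r => f k + k + 1) := by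
  intro i j h
  have := hf h
  have : (i : ℕ) < j := h
  dsimp only
  omega

theorem eastP {r : ℕ} (f : Fin r → ℕ) (hf : StrictMono f) (h1 : ∀ k, 1 ≤ f k) (k : Fin r) :
    eastBefore (Finset.univ.image f) (f k) = f k - 1 - k := by
  unfold eastBefore
  have e : (Finset.Icc 1 (f k - 1)).filter (fun b => b ∉ Finset.univ.image f)
      = Finset.Icc 1 (f k - 1) \ (Finset.Iio k).image f := by
    ext b
    simp only [Finset.mem_filter, Finset.mem_Icc, Finset.mem_image, Finset.mem_univ, true_and,
      Finset.mem_sdiff, Finset.mem_Iio]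
    constructor
    · rintro ⟨h, h'⟩
      exact ⟨h, fun ⟨a, _, e⟩ => h' ⟨a, e⟩⟩
    · rintro ⟨h, h'⟩
      refine ⟨h, fun ⟨a, e⟩ => h' ⟨a, ?_, e⟩⟩
      rw [← hf.lt_iff_lt]
      have := h1 k
      omega
  rw [e, Finset.card_sdiff_of_subset, Finset.card_image_of_injective _ hf.injective]
  · simp
  · intro b
    simp only [Finset.mem_image, Finset.mem_Iio, Finset.mem_Icc]
    rintro ⟨a, ha, rfl⟩
    have := h1 a
    have := hf ha
    omega

theorem monoP {r : ℕ} (f : Fin r → ℕ) (hf : StrictMono f) (h1 : ∀ k, 1 ≤ f k) :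
    pathMonomial (Finset.univ.image f) = ∑ k : Fin r, Finsupp.single (f k - 1 - k) 1 := by
  unfold pathMonomial
  rw [Finset.sum_image (fun a _ b _ h => hf.injective h)]
  exact Finset.sum_congr rfl fun k _ => by rw [eastP f hf h1]

theorem growP {r : ℕ} (f : Fin r → ℕ) (hf : StrictMono f) (i : Fin r) (d : ℕ)
    (h : i + d < r) : f i + d ≤ f ⟨i + d, h⟩ := by
  induction d with
  | zero => simp
  | succ d ih =>
    have h' := ih (by omega)
    have : f ⟨i + d, by omega⟩ < f ⟨i + (d + 1), h⟩ := hf (by simp [Fin.lt_def])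
    omega

theorem sqP {r : ℕ} (f : Fin r → ℕ) (hf : StrictMono f) (h1 : ∀ k, 1 ≤ f k) :
    (∀ i, pathMonomial (Finset.univ.image f) i ≤ 1) ↔
      StrictMono (fun k : Fin r => f k - 1 - k) := by
  rw [monoP f hf h1]
  have key : ∀ i, (∑ k : Fin r, Finsupp.single (f k - 1 - k) 1 : ℕ →₀ ℕ) i
      = (Finset.univ.filter (fun k : Fin r => f k - 1 - k = i)).card := by
    intro i
    rw [Finsupp.finsetSum_apply, Finset.card_filter]
    exact Finset.sum_congr rfl fun k _ => by rw [Finsupp.single_apply]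
  simp only [key, Finset.card_le_one, Finset.mem_filter, Finset.mem_univ, true_and]
  constructor
  · intro h
    apply Monotone.strictMono_of_injective
    · intro i j hij
      have hij' : (i : ℕ) ≤ j := hij
      have := growP f hf i (j - i) (by omega)
      have e : (⟨i + (j - i), by omega⟩ : Fin r) = j := Fin.ext (by simp; omega)
      rw [e] at this
      dsimp only
      omega
    · intro i j hij
      exact h _ i hij j rfl
  · intro h i a ha b hb
    exact h.injective (ha.trans hb.symm)

theorem barLP (n r : ℕ) (σ : Finset ℕ) (h : IsLatticePath n r σ) :
    IsLatticePath (n + r) r (barPath σ) := by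
  obtain ⟨f, hf, rfl⟩ := existsP σ h.2
  rw [pathP f hf] at h
  rw [barP f hf, pathP _ (barMono f hf)]
  intro k
  have := h k
  omega

theorem barAbove (r : ℕ) (σ τ : Finset ℕ) (h : σ.card = r) (h' : τ.card = r) :
    PathAbove (barPath σ) (barPath τ) ↔ PathAbove σ τ := by
  obtain ⟨f, hf, rfl⟩ := existsP σ h
  obtain ⟨g, hg, rfl⟩ := existsP τ h'
  rw [barP f hf, barP g hg, aboveP _ _ (barMono f hf) (barMono g hg), aboveP f g hf hg]
  simp

theorem barSq (n r : ℕ) (σ : Finset ℕ) (h : IsLatticePath n r σ) :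
    ∀ i, pathMonomial (barPath σ) i ≤ 1 := by
  obtain ⟨f, hf, rfl⟩ := existsP σ h.2
  rw [barP f hf, sqP _ (barMono f hf) (by simp)]
  convert hf using 2
  omega

theorem barInj (r : ℕ) (σ τ : Finset ℕ) (h : σ.card = r) (h' : τ.card = r)
    (e : barPath σ = barPath τ) : σ = τ := by
  obtain ⟨f, hf, rfl⟩ := existsP σ h
  obtain ⟨g, hg, rfl⟩ := existsP τ h'
  rw [barP f hf, barP g hg] at e
  have := injP _ _ (barMono f hf) (barMono g hg) e
  have : f = g := by
    funext k
    have := congrFun this k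
    simpa using this
  rw [this]

theorem barSurj (n r : ℕ) (α ω τ : Finset ℕ) (hα : IsLatticePath n r α)
    (hω : IsLatticePath n r ω) (hτ : IsLatticePath (n + r) r τ)
    (h1 : PathAbove (barPath α) τ) (h2 : PathAbove τ (barPath ω))
    (hs : ∀ i, pathMonomial τ i ≤ 1) :
    ∃ σ : Finset ℕ, IsLatticePath n r σ ∧ PathAbove α σ ∧ PathAbove σ ω ∧ τ = barPath σ := by
  obtain ⟨f, hf, rfl⟩ := existsP τ hτ.2
  obtain ⟨a, ha, rfl⟩ := existsP α hα.2
  obtain ⟨w, hw, rfl⟩ := existsP ω hω.2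
  rw [pathP _ ha] at hα
  rw [pathP _ hw] at hω
  rw [pathP _ hf] at hτ
  rw [barP a ha, aboveP _ _ (barMono a ha) hf] at h1
  rw [barP w hw, aboveP _ _ hf (barMono w hw)] at h2
  rw [sqP f hf (fun k => (hτ k).1)] at hs
  refine ⟨Finset.univ.image (fun k : Fin r => f k - 1 - k), ?_, ?_, ?_, ?_⟩
  · rw [pathP _ hs]
    intro k
    have := h1 k; have := h2 k; have := hα k; have := hω k
    omega
  · rw [aboveP _ _ ha hs]
    intro k
    have := h1 k
    omega
  · rw [aboveP _ _ hs hw]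
    intro k
    have := h2 k
    omega
  · rw [barP _ hs]
    congr 1
    funext k
    have := h1 k
    omega

/-- (i) `m(σ̄)` is the squarefree monomial `∏_{a ∈ N(σ)} x_a`; (ii) a path `τ`
between `ᾱ` and `ω̄` is of the form `σ̄` for a path `σ` between `α` and `ω` iff
`m(τ)` is squarefree; and the map `σ ↦ σ̄` is a bijection from the paths
between `α` and `ω` onto the paths between `ᾱ` and `ω̄` with squarefree
monomial. -/
theorem stmt13 (n r : ℕ) (hn : 0 < n) (hr : 0 < r) (α ω : Finset ℕ)
    (hα : IsLatticePath n r α) (hω : IsLatticePath n r ω) (hαω : PathAbove α ω) :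
    (∀ σ : Finset ℕ, IsLatticePath n r σ →
      pathMonomial (barPath σ) = ∑ a ∈ σ, Finsupp.single a 1) ∧
    (∀ τ : Finset ℕ, IsLatticePath (n + r) r τ →
      PathAbove (barPath α) τ → PathAbove τ (barPath ω) →
      ((∃ σ : Finset ℕ, IsLatticePath n r σ ∧ PathAbove α σ ∧ PathAbove σ ω ∧
          τ = barPath σ) ↔
        ∀ i, pathMonomial τ i ≤ 1)) ∧
    Set.BijOn barPath
      {σ : Finset ℕ | IsLatticePath n r σ ∧ PathAbove α σ ∧ PathAbove σ ω}
      {τ : Finset ℕ | IsLatticePath (n + r) r τ ∧ PathAbove (barPath α) τ ∧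
        PathAbove τ (barPath ω) ∧ ∀ i, pathMonomial τ i ≤ 1} := by
  refine ⟨?_, ?_, ?_, ?_, ?_⟩
  · intro σ h
    obtain ⟨f, hf, rfl⟩ := existsP σ h.2
    rw [barP f hf, monoP _ (barMono f hf) (by simp),
      Finset.sum_image (fun a _ b _ h => hf.injective h)]
    refine Finset.sum_congr rfl fun k _ => ?_
    congr 1
    omega
  · intro τ hτ h1 h2
    constructor
    · rintro ⟨σ, hσ, _, _, rfl⟩
      exact barSq n r σ hσ
    · exact barSurj n r α ω τ hα hω hτ h1 h2
  · rintro σ ⟨hσ, h1, h2⟩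
    exact ⟨barLP n r σ hσ, (barAbove r _ _ hα.2 hσ.2).2 h1, (barAbove r _ _ hσ.2 hω.2).2 h2,
      barSq n r σ hσ⟩
  · rintro σ ⟨hσ, _⟩ τ ⟨hτ, _⟩ e
    exact barInj r σ τ hσ.2 hτ.2 e
  · rintro τ ⟨hτ, h1, h2, h3⟩
    obtain ⟨σ, a, b, c, d⟩ := barSurj n r α ω τ hα hω hτ h1 h2 h3
    exact ⟨σ, ⟨a, b, c⟩, d.symm⟩
end
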